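/- Let T be the monoid presented by generators σ_1,…,σ_{n−1}, ϑ_1,…,ϑ_n subject to the relations: σ_i² = 1; σ_iσ_j = σ_jσ_i if |i−j| > 1; σ_iσ_jσ_i = σ_jσ_iσ_j if |i−j| = 1; ϑ_i² = ϑ_i; ϑ_iϑ_j = ϑ_jϑ_i for i ≠ j; σ_iϑ_i = ϑ_{i+1}σ_i; σ_iϑ_j = ϑ_jσ_i for j ≠ i, i+1; ϑ_iσ_iϑ_i = ϑ_iϑ_{i+1}. Then there is a bijection φ from T onto the set of partial bijections of Fin n (partial equivalences Fin n ≃. Fin n) such that φ(1) is the identity, φ(xy) = φ(x).trans(φ(y)) for all x, y ∈ T, φ(σ_i) is the transposition of i and i+1 (total bijection), and φ(ϑ_i) is the identity map restricted to the complement of {i}. In other words, T is isomorphic to the symmetric inverse monoid IS_n. -/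

import Mathlib

/-!
The presentation of the symmetric inverse monoid `IS_n` from Remark 2 of
Kudryavtseva–Mazorchuk, Section 4.

Generators: `Sum.inl i` represents `σ_{i+1}` for `i : Fin (n-1)`, and `Sum.inr j`
represents `ϑ_{j+1}` for `j : Fin n` (the paper's indices are `i.val + 1`, `j.val + 1`).
-/

/-- Generator type: `Sum.inl i` is `σ_{i+1}`, `Sum.inr j` is `ϑ_{j+1}`. -/
abbrev ISGen (n : ℕ) := Fin (n - 1) ⊕ Fin n

/-- The word `σ_{i+1}` in the free monoid. -/
def fσ {n : ℕ} (i : Fin (n - 1)) : FreeMonoid (ISGen n) := FreeMonoid.of (Sum.inl i)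

/-- The word `ϑ_{j+1}` in the free monoid. -/
def fϑ {n : ℕ} (j : Fin n) : FreeMonoid (ISGen n) := FreeMonoid.of (Sum.inr j)

/-- The point `i` of `{1, …, n}` (0-based: `i.val`). -/
def lo {n : ℕ} (i : Fin (n - 1)) : Fin n := ⟨i.1, by have := i.2; omega⟩

/-- The point `i + 1` of `{1, …, n}` (0-based: `i.val + 1`). -/
def hi {n : ℕ} (i : Fin (n - 1)) : Fin n := ⟨i.1 + 1, by have := i.2; omega⟩

/-- The defining relations of the presentation of `IS_n`. -/
inductive ISRel (n : ℕ) : FreeMonoid (ISGen n) → FreeMonoid (ISGen n) → Prop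
  | sigma_sq (i) : ISRel n (fσ i * fσ i) 1
  | sigma_comm (i j) (h : 1 < Nat.dist i.1 j.1) : ISRel n (fσ i * fσ j) (fσ j * fσ i)
  | braid (i j) (h : Nat.dist i.1 j.1 = 1) :
      ISRel n (fσ i * fσ j * fσ i) (fσ j * fσ i * fσ j)
  | theta_idem (j) : ISRel n (fϑ j * fϑ j) (fϑ j)
  | theta_comm (j j') (h : j ≠ j') : ISRel n (fϑ j * fϑ j') (fϑ j' * fϑ j)
  | sigma_theta (i) : ISRel n (fσ i * fϑ (lo i)) (fϑ (hi i) * fσ i)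
  | sigma_theta_comm (i j) (h : j ≠ lo i) (h' : j ≠ hi i) :
      ISRel n (fσ i * fϑ j) (fϑ j * fσ i)
  | theta_sigma_theta (i) :
      ISRel n (fϑ (lo i) * fσ i * fϑ (lo i)) (fϑ (lo i) * fϑ (hi i))

/-- The monoid `T` given by the presentation above. -/
abbrev ISMonoid (n : ℕ) := PresentedMonoid (ISRel n)

/-- The generator `σ_{i+1}` of `T`. -/
def σS {n : ℕ} (i : Fin (n - 1)) : ISMonoid n := PresentedMonoid.of (ISRel n) (Sum.inl i)

/-- The generator `ϑ_{j+1}` of `T`. -/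
def ϑS {n : ℕ} (j : Fin n) : ISMonoid n := PresentedMonoid.of (ISRel n) (Sum.inr j)

/-!
Let `s_1, …, s_{n-1}` satisfy the Coxeter relations in a monoid. Every product of them has the form
`s_j s_{j+1} ⋯ s_{n-1} w` with `w` a product of `s_1, …, s_{n-2}`, so by induction they generate at
most `n!` elements. Applied to the pairs `(σ_i, (i i+1))` in `T × S_n`, this count shows that the
submonoid they generate is the graph of a homomorphism `ψ : S_n → T` with `ψ (i i+1) = σ_i`.

Put `ϑ_A = ∏_{a ∈ A} ϑ_a`. The relations yield `ψ p ϑ_a = ϑ_{p a} ψ p` and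
`ϑ_a ϑ_b ψ (a b) = ϑ_a ϑ_b`, so every element of `T` has the form `ϑ_A ψ p`, and `ϑ_A` absorbs the
permutations that fix all points outside `A`. Such an element therefore depends only on `A` and on
the restriction of `p⁻¹` to the complement of `A`, which is precisely the partial permutation by
which it acts.
-/

open Equiv Submonoid

section Coxeter

variable {M : Type*} [Monoid M]

/-- The Coxeter relations of type `A_n` for a family of elements of a monoid. -/
structure IsCoxeterFamily {n : ℕ} (s : Fin n → M) : Prop where
  mul_self (i : Fin n) : s i * s i = 1
  commute {i j : Fin n} (hij : i.val + 1 < j.val) : Commute (s i) (s j)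
  braid {i j : Fin n} (hij : i.val + 1 = j.val) : s i * s j * s i = s j * s i * s j

/-- The product `s_j s_{j+1} ⋯ s_{n-1}`. For `j = 0, …, n` these represent the left cosets of the
submonoid generated by `s_0, …, s_{n-2}` in the one generated by all of `s`. -/
def tailProd {n : ℕ} (s : Fin n → M) (j : ℕ) : M :=
  ((List.ofFn s).drop j).prod

theorem tailProd_self {n : ℕ} (s : Fin n → M) : tailProd s n = 1 := by
  rw [tailProd, List.drop_of_length_le (by simp), List.prod_nil]

theorem tailProd_eq_mul {n : ℕ} (s : Fin n → M) (i : Fin n) :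
    tailProd s i = s i * tailProd s (i + 1) := by
  rw [tailProd, List.drop_eq_getElem_cons (by simp), List.prod_cons, List.getElem_ofFn, tailProd]

namespace IsCoxeterFamily

variable {n : ℕ}

theorem map {N : Type*} [Monoid N] {s : Fin n → M} (h : IsCoxeterFamily s) (f : M →* N) :
    IsCoxeterFamily (f ∘ s) where
  mul_self i := by simp only [Function.comp_apply, ← map_mul, h.mul_self, map_one]
  commute hij := (h.commute hij).map f
  braid hij := by simp only [Function.comp_apply, ← map_mul, h.braid hij]

theorem prodMk {N : Type*} [Monoid N] {s : Fin n → M} {t : Fin n → N} (hs : IsCoxeterFamily s)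
    (ht : IsCoxeterFamily t) : IsCoxeterFamily (fun i ↦ (s i, t i)) where
  mul_self i := Prod.ext (hs.mul_self i) (ht.mul_self i)
  commute hij := (hs.commute hij).prod (ht.commute hij)
  braid hij := Prod.ext (hs.braid hij) (ht.braid hij)

theorem comp_castSucc {s : Fin (n + 1) → M} (h : IsCoxeterFamily s) :
    IsCoxeterFamily (s ∘ Fin.castSucc) where
  mul_self i := h.mul_self i.castSucc
  commute hij := h.commute hij
  braid hij := h.braid hij

theorem commute_tailProd {s : Fin n → M} (h : IsCoxeterFamily s) {i : Fin n} {j : ℕ}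
    (hij : i.val + 1 < j) : Commute (s i) (tailProd s j) := by
  refine Commute.list_prod_right _ _ fun x hx ↦ ?_
  obtain ⟨k, hk, rfl⟩ := List.mem_drop_iff_getElem.mp hx
  rw [List.getElem_ofFn]
  exact h.commute (hij.trans_le (Nat.le_add_right j k))

theorem succ_mul_tailProd {s : Fin (n + 1) → M} (h : IsCoxeterFamily s) (i : Fin n) {j : ℕ}
    (hj : j ≤ i) : s i.succ * tailProd s j = tailProd s j * s i.castSucc := by
  induction hj using Nat.decreasingInduction with
  | self =>
    have tail_eq : tailProd s i = s i.castSucc * (s i.succ * tailProd s (i + 2)) := by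
      rw [← Fin.val_castSucc, tailProd_eq_mul]
      exact congrArg _ (tailProd_eq_mul s i.succ)
    calc s i.succ * tailProd s i
      _ = s i.succ * s i.castSucc * s i.succ * tailProd s (i + 2) := by
        simp only [tail_eq, mul_assoc]
      _ = s i.castSucc * s i.succ * (s i.castSucc * tailProd s (i + 2)) := by
        rw [← h.braid (by simp), mul_assoc]
      _ = s i.castSucc * s i.succ * (tailProd s (i + 2) * s i.castSucc) := by
        rw [h.commute_tailProd (by simp)]
      _ = tailProd s i * s i.castSucc := by
        simp only [tail_eq, mul_assoc]
  | of_succ j hj ih =>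
    have tail_eq : tailProd s j = s ⟨j, by lia⟩ * tailProd s (j + 1) :=
      tailProd_eq_mul s ⟨j, by lia⟩
    have hcomm : Commute (s ⟨j, by lia⟩) (s i.succ) := h.commute (by simpa using hj)
    rw [tail_eq, ← mul_assoc, ← hcomm.eq, mul_assoc, ih, mul_assoc]

theorem exists_mul_tailProd_eq {s : Fin (n + 1) → M} (h : IsCoxeterFamily s) (i : Fin (n + 1))
    {j : ℕ} (hj : j ≤ n + 1) :
    ∃ k ≤ n + 1, ∃ w ∈ closure (Set.range (s ∘ Fin.castSucc)),
      s i * tailProd s j = tailProd s k * w := by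
  have mem_closure (i : Fin n) : s i.castSucc ∈ closure (Set.range (s ∘ Fin.castSucc)) :=
    subset_closure ⟨i, rfl⟩
  rcases lt_trichotomy j i with hji | rfl | hij
  · obtain ⟨i, rfl⟩ := Fin.exists_succ_eq.mpr (Fin.ne_zero_of_lt (a := ⟨j, by lia⟩) hji)
    exact ⟨j, hj, _, mem_closure i, h.succ_mul_tailProd i (by simpa [Nat.lt_succ_iff] using hji)⟩
  · refine ⟨i + 1, by lia, 1, one_mem _, ?_⟩
    rw [tailProd_eq_mul, ← mul_assoc, h.mul_self, one_mul, mul_one]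
  · rcases (Nat.succ_le_of_lt hij).eq_or_lt with rfl | hij
    · exact ⟨i, by lia, 1, one_mem _, by rw [mul_one, tailProd_eq_mul]⟩
    · obtain ⟨i, rfl⟩ := Fin.exists_castSucc_eq.mpr
        (Fin.ne_last_of_lt (b := ⟨i + 1, by lia⟩) (Nat.lt_succ_self i))
      exact ⟨j, hj, _, mem_closure i, h.commute_tailProd hij⟩

theorem closure_range_subset_image {s : Fin (n + 1) → M} (h : IsCoxeterFamily s) :
    (closure (Set.range s) : Set M) ⊆
      (fun x : ℕ × M ↦ tailProd s x.1 * x.2) ''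
        (Set.Iic (n + 1) ×ˢ closure (Set.range (s ∘ Fin.castSucc))) := by
  intro x hx
  induction hx using closure_induction_left with
  | one => exact ⟨(n + 1, 1), ⟨Set.self_mem_Iic, one_mem _⟩, by simp [tailProd_self]⟩
  | mul_left _ hy x _ ih =>
    obtain ⟨i, rfl⟩ := hy
    obtain ⟨⟨j, w⟩, ⟨hj, hw⟩, rfl⟩ := ih
    obtain ⟨k, hk, v, hv, hkv⟩ := h.exists_mul_tailProd_eq i hj
    exact ⟨(k, v * w), ⟨hk, mul_mem hv hw⟩, by simp only [← mul_assoc, hkv]⟩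

theorem encard_closure_range_le {s : Fin n → M} (h : IsCoxeterFamily s) :
    (closure (Set.range s) : Set M).encard ≤ ((n + 1).factorial : ℕ) := by
  induction n with
  | zero => simp [Set.range_eq_empty]
  | succ n ih =>
    calc (closure (Set.range s) : Set M).encard
      _ ≤ (Set.Iic (n + 1) ×ˢ (closure (Set.range (s ∘ Fin.castSucc)) : Set M)).encard :=
        (Set.encard_le_encard h.closure_range_subset_image).trans (Set.encard_image_le _ _)
      _ ≤ (n + 2 : ℕ) * ((n + 1).factorial : ℕ) := by
        rw [Set.encard_prod, ← Finset.coe_Iic, Set.encard_coe_eq_coe_finsetCard, Nat.card_Iic]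
        gcongr
        exact ih h.comp_castSucc
      _ = ((n + 2).factorial : ℕ) := by rw [Nat.factorial_succ (n + 1), Nat.cast_mul]

end IsCoxeterFamily

theorem lo_ne_hi {n : ℕ} (i : Fin (n - 1)) : lo i ≠ hi i := by
  simp [lo, hi]

theorem isCoxeterFamily_swap_lo_hi (n : ℕ) :
    IsCoxeterFamily (fun i : Fin (n - 1) ↦ swap (lo i) (hi i)) where
  mul_self i := swap_mul_self _ _
  commute {i j} hij := by
    refine (Perm.disjoint_swap_swap ?_).commute
    simp only [lo, hi, List.nodup_cons, List.mem_cons, List.not_mem_nil, Fin.ext_iff]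
    grind
  braid {i j} hij := by
    have hi_eq : hi i = lo j := Fin.ext hij
    have hlo : lo i ≠ lo j := hi_eq ▸ lo_ne_hi i
    have hhi : lo i ≠ hi j := ne_of_lt (show i.val < j.val + 1 by lia)
    rw [hi_eq, swap_mul_swap_mul_swap hlo hhi, swap_comm (lo i), swap_comm (lo j) (hi j),
      swap_mul_swap_mul_swap (lo_ne_hi j).symm hhi.symm, swap_comm]

theorem mclosure_swap_lo_hi (n : ℕ) :
    closure (Set.range fun i : Fin (n - 1) ↦ swap (lo i) (hi i)) = ⊤ := by
  obtain _ | n := n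
  · exact Subsingleton.elim _ _
  · exact Perm.mclosure_swap_castSucc_succ n

/-- In `M × Perm (Fin n)` the pairs `(s_i, (i i+1))` generate a submonoid with at most `n!` elements
that projects onto `Perm (Fin n)`; it is therefore the graph of a homomorphism. -/
theorem IsCoxeterFamily.exists_permHom {n : ℕ} {s : Fin (n - 1) → M} (h : IsCoxeterFamily s) :
    ∃ ψ : Perm (Fin n) →* M, ∀ i, ψ (swap (lo i) (hi i)) = s i := by
  obtain _ | n := n
  · exact ⟨1, fun i ↦ i.elim0⟩
  let graph : Submonoid (M × Perm (Fin (n + 1))) :=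
    closure (Set.range fun i ↦ (s i, swap (lo i) (hi i)))
  let proj : graph →* Perm (Fin (n + 1)) := (MonoidHom.snd _ _).comp graph.subtype
  obtain ⟨graph_finite, graph_card⟩ := Set.encard_le_coe_iff_finite_ncard_le.mp
    (h.prodMk (isCoxeterFamily_swap_lo_hi (n + 1))).encard_closure_range_le
  have : Finite graph := graph_finite
  have proj_surjective : Function.Surjective proj := by
    rw [← MonoidHom.mrange_eq_top, MonoidHom.mrange_comp, mrange_subtype, MonoidHom.map_mclosure,
      ← Set.range_comp]
    exact mclosure_swap_lo_hi (n + 1)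
  have proj_bijective : Function.Bijective proj :=
    proj_surjective.bijective_of_nat_card_le (by rwa [Nat.card_perm, Nat.card_fin])
  let e : graph ≃* Perm (Fin (n + 1)) := MulEquiv.ofBijective proj proj_bijective
  refine ⟨((MonoidHom.fst _ _).comp graph.subtype).comp e.symm.toMonoidHom, fun i ↦ ?_⟩
  have he : e.symm (swap (lo i) (hi i)) = ⟨(s i, swap (lo i) (hi i)), subset_closure ⟨i, rfl⟩⟩ :=
    e.symm_apply_eq.mpr rfl
  exact congrArg (fun x : graph ↦ x.1.1) he

end Coxeter

/-- The symmetric inverse monoid of `α`, multiplied from left to right as in `PEquiv.trans`. -/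
instance instMonoidPartialPerm {α : Type*} : Monoid (α ≃. α) where
  mul f g := f.trans g
  one := PEquiv.refl α
  mul_assoc := PEquiv.trans_assoc
  one_mul := PEquiv.refl_trans
  mul_one := PEquiv.trans_refl

section PartialPerm

variable {M : Type*} [Monoid M] {α : Type*}

theorem partialPerm_mul_apply (f g : α ≃. α) (x : α) : (f * g) x = (f x).bind g := rfl

theorem exists_perm_extending [Finite α] (f : α ≃. α) :
    ∃ p : Perm α, ∀ x, f x ≠ none → f x = some (p x) := by
  have get_injective : Function.Injective fun x : {x // (f x).isSome} ↦ (f x).get x.2 :=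
    fun x y hxy ↦ Subtype.ext <|
      f.inj (Option.get_mem x.2) ((Option.get_mem y.2).trans (congrArg some hxy.symm))
  obtain ⟨p, hp⟩ := Perm.exists_extending_pair _ _ Subtype.val_injective get_injective
  refine ⟨p, fun x hx ↦ ?_⟩
  rw [hp ⟨x, Option.isSome_iff_ne_none.mpr hx⟩, Option.some_get]

/-- Permutations as partial permutations. Since partial permutations are composed from left to
right, a permutation has to be inverted to obtain a homomorphism. -/
def permToPartialPerm (α : Type*) : Perm α →* (α ≃. α) where
  toFun p := p⁻¹.toPEquiv
  map_one' := rfl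
  map_mul' p q := by rw [mul_inv_rev]; exact toPEquiv_trans p⁻¹ q⁻¹

theorem permToPartialPerm_apply (p : Perm α) (x : α) :
    permToPartialPerm α p x = some (p⁻¹ x) := rfl

variable [DecidableEq α]

/-- The idempotent partial permutation that is undefined at `a` only. -/
def puncture (a : α) : α ≃. α := PEquiv.ofSet {a}ᶜ

theorem puncture_apply (a x : α) : puncture a x = if x = a then none else some x := by
  simp [puncture, PEquiv.ofSet]

/-- The relations between permutations and the idempotents of corank one in a symmetric inverse
monoid (also called a rook monoid), imposed on their images `ψ` and `ϑ` in a monoid `M`. -/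
structure IsRookPair (ψ : Perm α →* M) (ϑ : α → M) : Prop where
  mul_self (a : α) : ϑ a * ϑ a = ϑ a
  commute (a b : α) : Commute (ϑ a) (ϑ b)
  perm_mul (p : Perm α) (a : α) : ψ p * ϑ a = ϑ (p a) * ψ p
  mul_swap {a b : α} (hab : a ≠ b) : ϑ a * ϑ b * ψ (swap a b) = ϑ a * ϑ b

theorem isRookPair_permToPartialPerm_puncture :
    IsRookPair (permToPartialPerm α) (puncture (α := α)) where
  mul_self a := by
    ext1 x
    by_cases hx : x = a <;> simp [partialPerm_mul_apply, puncture_apply, hx]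
  commute a b := by
    ext1 x
    obtain rfl | hxa := eq_or_ne x a <;> obtain rfl | hxb := eq_or_ne x b <;>
      simp [partialPerm_mul_apply, puncture_apply, *]
  perm_mul p a := by
    ext1 x
    have hx : p⁻¹ x = a ↔ x = p a := Perm.inv_eq_iff_eq
    by_cases hxa : x = p a
    · simp [partialPerm_mul_apply, puncture_apply, permToPartialPerm_apply, hxa]
    · rw [partialPerm_mul_apply, partialPerm_mul_apply, puncture_apply, permToPartialPerm_apply,
        Option.bind_some, puncture_apply, if_neg (mt hx.mp hxa), if_neg hxa, Option.bind_some,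
        permToPartialPerm_apply]
  mul_swap {a b} hab := by
    ext1 x
    obtain rfl | hxa := eq_or_ne x a <;> obtain rfl | hxb := eq_or_ne x b <;>
      simp [partialPerm_mul_apply, puncture_apply, permToPartialPerm_apply,
        swap_apply_of_ne_of_ne, *]

/-- The permutation group is doubly transitive, so the relation can be conjugated from one pair of
points to any other. -/
theorem mul_swap_of_perm_mul {ψ : Perm α →* M} {ϑ : α → M}
    (perm_mul : ∀ p a, ψ p * ϑ a = ϑ (p a) * ψ p) {x y : α} (hxy : x ≠ y)
    (mul_swap : ϑ x * ϑ y * ψ (swap x y) = ϑ x * ϑ y) {a b : α} (hab : a ≠ b) :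
    ϑ a * ϑ b * ψ (swap a b) = ϑ a * ϑ b := by
  obtain ⟨p, rfl, rfl⟩ : ∃ p : Perm α, p x = a ∧ p y = b :=
    MulAction.is_two_pretransitive_iff.mp (Perm.isMultiplyPretransitive α 2) hxy hab
  have conj : ϑ (p x) * ϑ (p y) * ψ p = ψ p * (ϑ x * ϑ y) := by
    rw [mul_assoc, ← perm_mul, ← mul_assoc, ← perm_mul, mul_assoc]
  have conj_inv : ψ p * (ϑ x * ϑ y) * ψ p⁻¹ = ϑ (p x) * ϑ (p y) := by
    rw [← conj, mul_assoc, ← map_mul, mul_inv_cancel, map_one, mul_one]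
  calc ϑ (p x) * ϑ (p y) * ψ (swap (p x) (p y))
    _ = ϑ (p x) * ϑ (p y) * ψ p * ψ (swap x y) * ψ p⁻¹ := by
      rw [swap_apply_apply, map_mul, map_mul]; simp only [mul_assoc]
    _ = ψ p * (ϑ x * ϑ y * ψ (swap x y)) * ψ p⁻¹ := by rw [conj, mul_assoc (ψ p)]
    _ = ϑ (p x) * ϑ (p y) := by rw [mul_swap, conj_inv]

namespace IsRookPair

variable {ψ : Perm α →* M} {ϑ : α → M}

theorem pairwise_commute (h : IsRookPair ψ ϑ) (A : Set α) : A.Pairwise (Function.onFun Commute ϑ) :=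
  fun a _ b _ _ ↦ h.commute a b

/-- The product of the idempotents `ϑ a` over the points `a` of a finite set. -/
def thetaProd (h : IsRookPair ψ ϑ) (A : Finset α) : M :=
  A.noncommProd ϑ (h.pairwise_commute A)

theorem thetaProd_empty (h : IsRookPair ψ ϑ) : h.thetaProd ∅ = 1 :=
  Finset.noncommProd_empty _ _

theorem thetaProd_mul_of_mem (h : IsRookPair ψ ϑ) {A : Finset α} {a : α} (ha : a ∈ A) :
    h.thetaProd A * ϑ a = h.thetaProd A := by
  rw [thetaProd, ← Finset.noncommProd_erase_mul A ha ϑ _ (h.pairwise_commute _), mul_assoc,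
    h.mul_self]

theorem thetaProd_insert (h : IsRookPair ψ ϑ) (a : α) (A : Finset α) :
    h.thetaProd (insert a A) = ϑ a * h.thetaProd A := by
  by_cases ha : a ∈ A
  · have hcomm : Commute (ϑ a) (h.thetaProd A) :=
      Finset.noncommProd_commute _ _ _ _ fun b _ ↦ h.commute a b
    rw [Finset.insert_eq_of_mem ha, hcomm.eq, h.thetaProd_mul_of_mem ha]
  · exact Finset.noncommProd_insert_of_notMem A a ϑ _ ha

theorem perm_mul_thetaProd (h : IsRookPair ψ ϑ) (p : Perm α) (A : Finset α) :
    ψ p * h.thetaProd A = h.thetaProd (A.image p) * ψ p := by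
  induction A using Finset.induction_on with
  | empty => rw [Finset.image_empty, h.thetaProd_empty, one_mul, mul_one]
  | insert a A _ ih =>
    rw [Finset.image_insert, h.thetaProd_insert, h.thetaProd_insert, ← mul_assoc, h.perm_mul,
      mul_assoc, ih, mul_assoc]

theorem thetaProd_mul_swap (h : IsRookPair ψ ϑ) {A : Finset α} {a b : α} (ha : a ∈ A) (hb : b ∈ A) :
    h.thetaProd A * ψ (swap a b) = h.thetaProd A := by
  obtain rfl | hab := eq_or_ne a b
  · rw [swap_self]
    exact (congrArg _ (map_one ψ)).trans (mul_one _)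
  · rw [← h.thetaProd_mul_of_mem hb, ← h.thetaProd_mul_of_mem ha, mul_assoc (h.thetaProd A),
      mul_assoc (h.thetaProd A), h.mul_swap hab]

/-- If `p` moves only points of `A ∪ {a}`, then `swap a (p a) * p` moves only points of `A`. -/
theorem thetaProd_mul_perm_of_fixes (h : IsRookPair ψ ϑ) {A : Finset α} {p : Perm α}
    (hp : ∀ x ∉ A, p x = x) : h.thetaProd A * ψ p = h.thetaProd A := by
  induction A using Finset.induction_on generalizing p with
  | empty =>
    obtain rfl : p = 1 := Equiv.ext fun x ↦ hp x (Finset.notMem_empty x)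
    rw [map_one, mul_one]
  | insert a A _ ih =>
    have hpa : p a ∈ insert a A := by
      by_contra hpa
      have : p a = a := p.injective (hp _ hpa)
      exact hpa (by simp [this])
    have fixes : ∀ x ∉ A, (swap a (p a) * p) x = x := by
      intro x hx
      obtain rfl | hxa := eq_or_ne x a
      · exact swap_apply_right _ _
      · have hpx : p x = x := hp x (by simp [hxa, hx])
        rw [Perm.mul_apply, hpx]
        exact swap_apply_of_ne_of_ne hxa fun hxp ↦ hxa (p.injective (hpx.trans hxp))
    calc h.thetaProd (insert a A) * ψ p
      _ = h.thetaProd (insert a A) * ψ (swap a (p a)) * ψ (swap a (p a) * p) := by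
        rw [mul_assoc, ← map_mul, swap_mul_self_mul]
      _ = ϑ a * (h.thetaProd A * ψ (swap a (p a) * p)) := by
        rw [h.thetaProd_mul_swap (Finset.mem_insert_self a A) hpa, h.thetaProd_insert, mul_assoc]
      _ = h.thetaProd (insert a A) := by rw [ih fixes, h.thetaProd_insert]

theorem thetaProd_mul_perm_congr (h : IsRookPair ψ ϑ) {A : Finset α} {p q : Perm α}
    (hpq : ∀ x ∉ A, p⁻¹ x = q⁻¹ x) : h.thetaProd A * ψ p = h.thetaProd A * ψ q := by
  have fixes : ∀ x ∉ A, (p * q⁻¹) x = x := fun x hx ↦ by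
    rw [Perm.mul_apply, ← hpq x hx, Perm.inv_def, apply_symm_apply]
  calc h.thetaProd A * ψ p
    _ = h.thetaProd A * ψ (p * q⁻¹) * ψ q := by rw [mul_assoc, ← map_mul, inv_mul_cancel_right]
    _ = h.thetaProd A * ψ q := by rw [h.thetaProd_mul_perm_of_fixes fixes]

theorem exists_eq_thetaProd_mul_perm (h : IsRookPair ψ ϑ) {x : M}
    (hx : x ∈ closure (Set.range ψ ∪ Set.range ϑ)) : ∃ A p, x = h.thetaProd A * ψ p := by
  induction hx using closure_induction_left with
  | one => exact ⟨∅, 1, by rw [h.thetaProd_empty, map_one, mul_one]⟩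
  | mul_left y hy x _ ih =>
    obtain ⟨A, p, rfl⟩ := ih
    obtain ⟨q, rfl⟩ | ⟨a, rfl⟩ := hy
    · refine ⟨A.image q, q * p, ?_⟩
      rw [← mul_assoc, h.perm_mul_thetaProd, mul_assoc, map_mul]
    · exact ⟨insert a A, p, by rw [h.thetaProd_insert, mul_assoc]⟩

variable {φ : M →* (α ≃. α)}

theorem map_thetaProd_apply (h : IsRookPair ψ ϑ) (hϑ : ∀ a, φ (ϑ a) = puncture a) (A : Finset α)
    (x : α) : φ (h.thetaProd A) x = if x ∈ A then none else some x := by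
  induction A using Finset.induction_on with
  | empty => rw [h.thetaProd_empty, map_one, if_neg (Finset.notMem_empty x)]; rfl
  | insert a A _ ih =>
    rw [h.thetaProd_insert, map_mul, partialPerm_mul_apply, hϑ, puncture_apply]
    by_cases hx : x = a <;> simp [hx, ih]

theorem map_thetaProd_mul_perm_apply (h : IsRookPair ψ ϑ) (hψ : φ.comp ψ = permToPartialPerm α)
    (hϑ : ∀ a, φ (ϑ a) = puncture a) (A : Finset α) (p : Perm α) (x : α) :
    φ (h.thetaProd A * ψ p) x = if x ∈ A then none else some (p⁻¹ x) := by
  rw [map_mul, partialPerm_mul_apply, h.map_thetaProd_apply hϑ, ← MonoidHom.comp_apply, hψ]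
  split_ifs <;> rfl

theorem map_injective_of_closure_eq_top (h : IsRookPair ψ ϑ)
    (hM : closure (Set.range ψ ∪ Set.range ϑ) = ⊤) (hψ : φ.comp ψ = permToPartialPerm α)
    (hϑ : ∀ a, φ (ϑ a) = puncture a) : Function.Injective φ := by
  intro x y hxy
  obtain ⟨A, p, rfl⟩ := h.exists_eq_thetaProd_mul_perm (hM ▸ mem_top x)
  obtain ⟨B, q, rfl⟩ := h.exists_eq_thetaProd_mul_perm (hM ▸ mem_top y)
  have values_eq (x : α) :
      (if x ∈ A then none else some (p⁻¹ x)) = if x ∈ B then none else some (q⁻¹ x) := by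
    rw [← h.map_thetaProd_mul_perm_apply hψ hϑ, hxy, h.map_thetaProd_mul_perm_apply hψ hϑ]
  obtain rfl : A = B := by
    ext x
    have := values_eq x
    split_ifs at this <;> simp_all
  exact h.thetaProd_mul_perm_congr fun x hx ↦ by simpa [hx] using values_eq x

theorem map_surjective [Finite α] (h : IsRookPair ψ ϑ) (hψ : φ.comp ψ = permToPartialPerm α)
    (hϑ : ∀ a, φ (ϑ a) = puncture a) : Function.Surjective φ := by
  intro f
  obtain ⟨p, hp⟩ := exists_perm_extending f
  refine ⟨h.thetaProd (Set.toFinite {x | f x = none}).toFinset * ψ p⁻¹, ?_⟩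
  ext1 x
  rw [h.map_thetaProd_mul_perm_apply hψ hϑ, inv_inv]
  split_ifs with hx
  · exact ((Set.Finite.mem_toFinset _).mp hx).symm
  · exact (hp x fun hfx ↦ hx ((Set.Finite.mem_toFinset _).mpr hfx)).symm

theorem lift_eq_of_rel {n : ℕ} {ψ : Perm (Fin n) →* M} {ϑ : Fin n → M} (h : IsRookPair ψ ϑ)
    {u v : FreeMonoid (ISGen n)} (huv : ISRel n u v) :
    FreeMonoid.lift (Sum.elim (fun i ↦ ψ (swap (lo i) (hi i))) ϑ) u =
      FreeMonoid.lift (Sum.elim (fun i ↦ ψ (swap (lo i) (hi i))) ϑ) v := by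
  have coxeter : IsCoxeterFamily fun i : Fin (n - 1) ↦ ψ (swap (lo i) (hi i)) :=
    (isCoxeterFamily_swap_lo_hi n).map ψ
  cases huv <;>
    simp only [fσ, fϑ, map_mul, map_one, FreeMonoid.lift_eval_of, Sum.elim_inl, Sum.elim_inr]
  case sigma_sq i => exact coxeter.mul_self i
  case sigma_comm i j hij =>
    obtain hij | hij : i.val + 1 < j.val ∨ j.val + 1 < i.val := by grind [Nat.dist]
    · exact coxeter.commute hij
    · exact (coxeter.commute hij).symm
  case braid i j hij =>
    obtain hij | hij : i.val + 1 = j.val ∨ j.val + 1 = i.val := by grind [Nat.dist]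
    · exact coxeter.braid hij
    · exact (coxeter.braid hij).symm
  case theta_idem j => exact h.mul_self j
  case theta_comm j j' _ => exact h.commute j j'
  case sigma_theta i => rw [h.perm_mul, swap_apply_left]
  case sigma_theta_comm i j hlo hhi => rw [h.perm_mul, swap_apply_of_ne_of_ne hlo hhi]
  case theta_sigma_theta i =>
    rw [mul_assoc, h.perm_mul, swap_apply_left, ← mul_assoc, h.mul_swap (lo_ne_hi i)]

end IsRookPair

end PartialPerm

/-- The representation of the presented monoid by partial permutations, with `σ_i` acting as the
transposition `(i i+1)` and `ϑ_j` as the identity off `j`. -/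
def toPartialPerm (n : ℕ) : ISMonoid n →* (Fin n ≃. Fin n) :=
  PresentedMonoid.lift (Sum.elim (fun i ↦ permToPartialPerm _ (swap (lo i) (hi i))) puncture)
    fun _ _ ↦ isRookPair_permToPartialPerm_puncture.lift_eq_of_rel

section Presentation

variable {n : ℕ}

theorem toPartialPerm_σS (i : Fin (n - 1)) :
    toPartialPerm n (σS i) = permToPartialPerm _ (swap (lo i) (hi i)) := rfl

theorem toPartialPerm_ϑS (j : Fin n) : toPartialPerm n (ϑS j) = puncture j := rfl

theorem isCoxeterFamily_σS : IsCoxeterFamily (σS (n := n)) where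
  mul_self i := PresentedMonoid.mk_eq_mk_of_rel (.sigma_sq i)
  commute {i j} hij := PresentedMonoid.mk_eq_mk_of_rel (.sigma_comm i j (by grind [Nat.dist]))
  braid {i j} hij := PresentedMonoid.mk_eq_mk_of_rel (.braid i j (by grind [Nat.dist]))

theorem σS_mul_ϑS_lo (i : Fin (n - 1)) : σS i * ϑS (lo i) = ϑS (hi i) * σS i :=
  PresentedMonoid.mk_eq_mk_of_rel (.sigma_theta i)

theorem σS_mul_ϑS (i : Fin (n - 1)) (j : Fin n) :
    σS i * ϑS j = ϑS (swap (lo i) (hi i) j) * σS i := by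
  obtain rfl | hlo := eq_or_ne j (lo i)
  · rw [swap_apply_left, σS_mul_ϑS_lo]
  obtain rfl | hhi := eq_or_ne j (hi i)
  · have sq := isCoxeterFamily_σS.mul_self i
    calc σS i * ϑS (hi i)
      _ = σS i * (ϑS (hi i) * σS i) * σS i := by rw [mul_assoc, mul_assoc, sq, mul_one]
      _ = ϑS (swap (lo i) (hi i) (hi i)) * σS i := by
        rw [← σS_mul_ϑS_lo, ← mul_assoc, sq, one_mul, swap_apply_right]
  · rw [swap_apply_of_ne_of_ne hlo hhi]
    exact PresentedMonoid.mk_eq_mk_of_rel (.sigma_theta_comm i j hlo hhi)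

theorem ϑS_lo_mul_ϑS_hi_mul_σS (i : Fin (n - 1)) :
    ϑS (lo i) * ϑS (hi i) * σS i = ϑS (lo i) * ϑS (hi i) := by
  rw [mul_assoc, ← σS_mul_ϑS_lo, ← mul_assoc]
  exact PresentedMonoid.mk_eq_mk_of_rel (.theta_sigma_theta i)

variable {ψ : Perm (Fin n) →* ISMonoid n}

theorem perm_mul_ϑS (hψ : ∀ i, ψ (swap (lo i) (hi i)) = σS i) (p : Perm (Fin n))
    (j : Fin n) : ψ p * ϑS j = ϑS (p j) * ψ p := by
  have hp : p ∈ closure (Set.range fun i : Fin (n - 1) ↦ swap (lo i) (hi i)) :=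
    mclosure_swap_lo_hi n ▸ mem_top p
  induction hp using closure_induction_left with
  | one => simp
  | mul_left _ hs p _ ih =>
    obtain ⟨i, rfl⟩ := hs
    rw [map_mul, hψ, mul_assoc, ih, ← mul_assoc, σS_mul_ϑS, mul_assoc, Perm.mul_apply]

theorem isRookPair_ϑS (hψ : ∀ i, ψ (swap (lo i) (hi i)) = σS i) : IsRookPair ψ ϑS where
  mul_self j := PresentedMonoid.mk_eq_mk_of_rel (.theta_idem j)
  commute j j' := by
    obtain rfl | hj := eq_or_ne j j'
    · exact Commute.refl _
    · exact PresentedMonoid.mk_eq_mk_of_rel (.theta_comm j j' hj)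
  perm_mul := perm_mul_ϑS hψ
  mul_swap {a b} hab := by
    have hn : 0 < n - 1 := by have := Fin.val_ne_of_ne hab; lia
    let i : Fin (n - 1) := ⟨0, hn⟩
    refine mul_swap_of_perm_mul (perm_mul_ϑS hψ) (lo_ne_hi i) ?_ hab
    rw [hψ, ϑS_lo_mul_ϑS_hi_mul_σS]

theorem closure_range_perm_union_range_ϑS (hψ : ∀ i, ψ (swap (lo i) (hi i)) = σS i) :
    closure (Set.range ψ ∪ Set.range ϑS) = ⊤ := by
  rw [← top_le_iff, ← PresentedMonoid.closure_range_of (ISRel n)]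
  refine closure_mono ?_
  rintro _ ⟨i | j, rfl⟩
  · exact .inl ⟨_, hψ i⟩
  · exact .inr ⟨j, rfl⟩

theorem toPartialPerm_comp_perm (hψ : ∀ i, ψ (swap (lo i) (hi i)) = σS i) :
    (toPartialPerm n).comp ψ = permToPartialPerm (Fin n) := by
  refine MonoidHom.eq_of_eqOn_denseM (mclosure_swap_lo_hi n) ?_
  rintro _ ⟨i, rfl⟩
  rw [MonoidHom.comp_apply, hψ, toPartialPerm_σS]

end Presentation

theorem toPartialPerm_bijective (n : ℕ) : Function.Bijective (toPartialPerm n) := by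
  obtain ⟨ψ, hψ⟩ := (isCoxeterFamily_σS (n := n)).exists_permHom
  have rook := isRookPair_ϑS hψ
  have hcomp := toPartialPerm_comp_perm hψ
  exact ⟨rook.map_injective_of_closure_eq_top (closure_range_perm_union_range_ϑS hψ) hcomp
    toPartialPerm_ϑS, rook.map_surjective hcomp toPartialPerm_ϑS⟩

/-- Remark 2 of Kudryavtseva–Mazorchuk: the monoid `T` presented above is isomorphic to
the symmetric inverse monoid `IS_n` of partial bijections of `Fin n`: there is a
bijection `φ` from `T` onto `Fin n ≃. Fin n` with `φ(1) = id`,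
`φ(xy) = φ(x).trans (φ(y))`, `φ(σ_i)` the transposition `(i, i+1)`, and `φ(ϑ_j)` the
identity restricted to the complement of `{j}`. -/
theorem IS_presentation (n : ℕ) :
    ∃ φ : ISMonoid n → (Fin n ≃. Fin n),
      Function.Bijective φ ∧
      φ 1 = PEquiv.refl (Fin n) ∧
      (∀ x y : ISMonoid n, φ (x * y) = (φ x).trans (φ y)) ∧
      (∀ i : Fin (n - 1), φ (σS i) = (Equiv.swap (lo i) (hi i)).toPEquiv) ∧
      (∀ j : Fin n, ∀ x : Fin n, φ (ϑS j) x = if x = j then none else some x) := by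
  refine ⟨toPartialPerm n, toPartialPerm_bijective n, map_one _, map_mul _, fun i ↦ ?_,
    fun j x ↦ ?_⟩
  · rw [toPartialPerm_σS, ← swap_inv]
    rfl
  · rw [toPartialPerm_ϑS, puncture_apply]
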